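/- arXiv:2207.06466 — 2 statements merged into one kernel-verified Lean document; each statement's English description precedes it below -/
import Mathlib

section
/- Let Γ be a graph of order N ≥ 3. If the minimum degree of Γ satisfies δ(Γ) ≥ (N+2)/2, then Γ is edge pancyclic. -/
/-!
Delete the endpoints of the edge `αβ`. What remains satisfies the degree condition of Ore's theorem,
so its vertices can be arranged on a closed tour `v₀, v₁, …, v_{n-1}` with `n = N - 2`. For
`0 ≤ k < n` the indices `i` with `v_i ∼ α` and those with `v_{i+k} ∼ β` are together more than `n`
in number, so some `i` is of both kinds, and `α, v_i, v_{i+1}, …, v_{i+k}, β` is a path which `αβ`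
closes up to a cycle of length `k + 3`.

Ore's theorem itself uses the same pigeonhole argument: along a longest path, a neighbour of the
start directly following a neighbour of the end allows the path to be reconnected into a closed
tour, and by maximality no edge leaves this tour.
-/

section

open Finset SimpleGraph

theorem exists_mem_mem_of_surjOn_of_card_lt_card_add_card {ι κ μ : Type*} {s : Finset ι}
    {f : ι → κ} {g : ι → μ} {A : Finset κ} {B : Finset μ} (hf : Set.SurjOn f s A)
    (hg : Set.SurjOn g s B) (h : #s < #A + #B) : ∃ i ∈ s, f i ∈ A ∧ g i ∈ B := by
  classical
  have hA : #A ≤ #{i ∈ s | f i ∈ A} := card_le_card_of_surjOn f fun a ha ↦ by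
    obtain ⟨i, hi, rfl⟩ := hf ha
    exact ⟨i, by simp_all, rfl⟩
  have hB : #B ≤ #{i ∈ s | g i ∈ B} := card_le_card_of_surjOn g fun b hb ↦ by
    obtain ⟨i, hi, rfl⟩ := hg hb
    exact ⟨i, by simp_all, rfl⟩
  obtain ⟨i, hi⟩ := inter_nonempty_of_card_lt_card_add_card (filter_subset (f · ∈ A) s)
    (filter_subset (g · ∈ B) s) (by lia)
  grind

variable {V : Type*} {G : SimpleGraph V} {a b c : V}

/-! ### Rerouting paths -/

theorem getVert_append_cons_self (p : G.Walk a b) (hba : G.Adj b a) {j : ℕ}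
    (hj : j ≤ 2 * p.length + 1) :
    (p.append (.cons hba p)).getVert j = p.getVert (j % (p.length + 1)) := by
  rw [Walk.getVert_append']
  split_ifs with h
  · rw [Nat.mod_eq_of_lt (by lia)]
  · obtain ⟨m, rfl⟩ : ∃ m, j = m + (p.length + 1) := ⟨j - (p.length + 1), by lia⟩
    rw [show m + (p.length + 1) - p.length = m + 1 by lia, Walk.getVert_cons_succ,
      Nat.add_mod_right, Nat.mod_eq_of_lt (by lia)]

theorem exists_isPath_getVert_add_mod {p : G.Walk a b} (hp : p.IsPath) (hba : G.Adj b a)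
    {i k : ℕ} (hi : i ≤ p.length) (hk : k ≤ p.length) :
    ∃ q : G.Walk (p.getVert i) (p.getVert ((i + k) % (p.length + 1))),
      q.IsPath ∧ q.length = k ∧ q.support ⊆ p.support := by
  set n := p.length + 1
  -- Two turns around the tour, so that a segment of at most one turn never wraps.
  let W := p.append (.cons hba p)
  let r := (W.drop i).take k
  have hW : ∀ j ≤ k, W.getVert (i + j) = p.getVert ((i + j) % n) := fun j hj ↦
    getVert_append_cons_self p hba (by lia)
  have hr : r.length = k := by
    simp only [r, W, Walk.take_length, Walk.drop_length, Walk.length_append, Walk.length_cons]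
    lia
  have hrW : ∀ j ≤ k, r.getVert j = p.getVert ((i + j) % n) := fun j hj ↦ by
    simp [r, hj, hW]
  have hr_path : r.IsPath := by
    refine (Walk.IsPath.getVert_injOn_iff r).1 fun x hx y hy hxy ↦ ?_
    simp only [Set.mem_ofPred_eq, hr] at hx hy
    rw [hrW x hx, hrW y hy] at hxy
    have hmod := hp.getVert_injOn (Nat.lt_succ_iff.1 (Nat.mod_lt (i + x) p.length.succ_pos))
      (Nat.lt_succ_iff.1 (Nat.mod_lt (i + y) p.length.succ_pos)) hxy
    exact (Nat.ModEq.add_left_cancel' i hmod).eq_of_lt_of_lt (by lia) (by lia)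
  have hstart : W.getVert i = p.getVert i := by
    simpa [Nat.mod_eq_of_lt (show i < n by lia)] using hW 0 k.zero_le
  have hend : (W.drop i).getVert k = p.getVert ((i + k) % n) := by simpa using hW k le_rfl
  refine ⟨r.copy hstart hend, by simpa using hr_path, by simpa using hr, fun v hv ↦ ?_⟩
  rw [Walk.support_copy] at hv
  obtain ⟨j, rfl, hj⟩ := Walk.mem_support_iff_exists_getVert.1 hv
  exact hrW j (hr ▸ hj) ▸ p.getVert_mem_support _

theorem exists_isPath_length_eq_of_isHamiltonian_of_adj [Fintype V] [DecidableEq V]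
    {p : G.Walk a b} (hp : p.IsHamiltonian) (hba : G.Adj b a)
    {A B : Finset V} (hAB : Fintype.card V < #A + #B) {k : ℕ} (hk : k < Fintype.card V) :
    ∃ x ∈ A, ∃ y ∈ B, ∃ q : G.Walk x y, q.IsPath ∧ q.length = k := by
  have hlen : p.length + 1 = Fintype.card V := by rw [← p.length_support, hp.length_support]
  have hsurj : ∀ v, ∃ i ≤ p.length, p.getVert i = v := fun v ↦ by
    obtain ⟨i, hi, hi'⟩ := Walk.mem_support_iff_exists_getVert.1 (hp.mem_support v)
    exact ⟨i, hi', hi⟩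
  have hA : Set.SurjOn p.getVert (range (Fintype.card V)) A := fun v _ ↦ by
    obtain ⟨i, hi, rfl⟩ := hsurj v
    exact ⟨i, mem_coe.2 (mem_range.2 (by lia)), rfl⟩
  have hB : Set.SurjOn (fun i ↦ p.getVert ((i + k) % Fintype.card V)) (range (Fintype.card V)) B :=
    fun v _ ↦ by
      obtain ⟨i, hi, rfl⟩ := hsurj v
      refine ⟨(i + (Fintype.card V - k)) % Fintype.card V, by simpa using Nat.mod_lt _ (by lia), ?_⟩
      simp only [Nat.mod_add_mod]
      rw [show i + (Fintype.card V - k) + k = i + Fintype.card V by lia, Nat.add_mod_right,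
        Nat.mod_eq_of_lt (by lia)]
  obtain ⟨i, hi, hiA, hiB⟩ :=
    exists_mem_mem_of_surjOn_of_card_lt_card_add_card hA hB (by simpa using hAB)
  rw [mem_range] at hi
  obtain ⟨q, hq, hqk, -⟩ := exists_isPath_getVert_add_mod (i := i) (k := k) hp.isPath hba
    (by lia) (by lia)
  exact ⟨_, hiA, _, hlen ▸ hiB, q, hq, hqk⟩

theorem exists_support_perm_and_adj_of_crossing (p : G.Walk a b) {i : ℕ} (hi : i < p.length)
    (ha : G.Adj a (p.getVert (i + 1))) (hb : G.Adj b (p.getVert i)) :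
    ∃ (c : V) (q : G.Walk a c), q.support.Perm p.support ∧ G.Adj c a := by
  refine ⟨_, (p.take i).append (.cons hb.symm (p.drop (i + 1)).reverse), ?_, ha.symm⟩
  have hp : p.support = p.support.take (i + 1) ++ p.support.drop (i + 1) :=
    (List.take_append_drop ..).symm
  rw [Walk.support_append, Walk.support_take, Walk.support_cons, List.tail_cons,
    Walk.support_reverse, Walk.drop_support_eq_support_drop_min, min_eq_left hi]
  conv_rhs => rw [hp]
  exact (List.reverse_perm _).append_left _

theorem exists_isCycle_of_isPath {x y α β : V} {q : G.Walk x y} (hq : q.IsPath)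
    (hα : α ∉ q.support) (hβ : β ∉ q.support) (hαx : G.Adj α x) (hβy : G.Adj β y)
    (hαβ : G.Adj α β) :
    ∃ w : G.Walk β β, w.IsCycle ∧ w.length = q.length + 3 ∧ s(α, β) ∈ w.edges := by
  refine ⟨.cons hαβ.symm (.cons hαx (q.concat hβy.symm)), ?_, by simp, by simp [Sym2.eq_swap]⟩
  have hα' : α ∉ (q.concat hβy.symm).support := by simp [Walk.support_concat, hα, hαβ.ne]
  refine (Walk.cons_isCycle_iff _ _).2 ⟨(hq.concat hβ hβy.symm).cons hα', fun h ↦ ?_⟩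
  rw [Walk.edges_cons, List.mem_cons] at h
  rcases h with h | h
  · have hβx : β = x := by simpa [hαβ.ne'] using h
    exact hβ (hβx ▸ q.start_mem_support)
  · exact hα' (Walk.snd_mem_support_of_mem_edges _ h)

/-! ### Longest paths -/

/-- A walk is a longest path if it is a path and no path of the graph, with whatever endpoints, is
longer. -/
def IsLongestPath (p : G.Walk a b) : Prop :=
  p.IsPath ∧ ∀ ⦃u v : V⦄ (q : G.Walk u v), q.IsPath → q.length ≤ p.length

theorem exists_isLongestPath (G : SimpleGraph V) [Nonempty V] [Finite G.edgeSet] :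
    ∃ (a b : V) (p : G.Walk a b), IsLongestPath p := by
  obtain ⟨a, b, p, hp, hmax⟩ := Walk.exists_isPath_forall_isPath_length_le_length G
  exact ⟨a, b, p, hp, fun u v q ↦ hmax u v q⟩

namespace IsLongestPath

variable {p : G.Walk a b}

theorem of_length_eq (hp : IsLongestPath p) {u v : V} {q : G.Walk u v} (hq : q.IsPath)
    (h : q.length = p.length) : IsLongestPath q :=
  ⟨hq, fun _ _ r hr ↦ h ▸ hp.2 r hr⟩

theorem reverse (hp : IsLongestPath p) : IsLongestPath p.reverse :=
  hp.of_length_eq hp.1.reverse p.length_reverse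

theorem mem_support_of_adj_start (hp : IsLongestPath p) (hac : G.Adj a c) : c ∈ p.support := by
  by_contra hc
  simpa using hp.2 (.cons hac.symm p) (hp.1.cons hc)

theorem mem_support_of_adj_end (hp : IsLongestPath p) (hbc : G.Adj b c) : c ∈ p.support := by
  simpa using hp.reverse.mem_support_of_adj_start hbc

theorem mem_support_of_adj (hp : IsLongestPath p) (hba : G.Adj b a) {v w : V}
    (hv : v ∈ p.support) (hvw : G.Adj v w) : w ∈ p.support := by
  obtain ⟨i, rfl, hi⟩ := Walk.mem_support_iff_exists_getVert.1 hv
  obtain ⟨q, hq, hlen, hsupp⟩ := exists_isPath_getVert_add_mod hp.1 hba hi le_rfl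
  exact hsupp ((hp.of_length_eq hq hlen).mem_support_of_adj_start hvw)

theorem exists_isLongestPath_adj [G.LocallyFinite] (hp : IsLongestPath p)
    (h : p.length < G.degree a + G.degree b) :
    ∃ (c : V) (q : G.Walk a c), IsLongestPath q ∧ G.Adj c a := by
  have hsurj_start : Set.SurjOn (fun i ↦ p.getVert (i + 1)) (range p.length)
      (G.neighborFinset a) := fun v hv ↦ by
    have hav : G.Adj a v := by simpa using hv
    obtain ⟨i, rfl, hi⟩ :=
      Walk.mem_support_iff_exists_getVert.1 (hp.mem_support_of_adj_start hav)
    cases i with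
    | zero => simp at hav
    | succ i => exact ⟨i, by simpa using hi, rfl⟩
  have hsurj_end : Set.SurjOn p.getVert (range p.length) (G.neighborFinset b) := fun v hv ↦ by
    have hbv : G.Adj b v := by simpa using hv
    obtain ⟨i, rfl, hi⟩ :=
      Walk.mem_support_iff_exists_getVert.1 (hp.mem_support_of_adj_end hbv)
    have hne : i ≠ p.length := by rintro rfl; simp at hbv
    exact ⟨i, by simpa using lt_of_le_of_ne hi hne, rfl⟩
  obtain ⟨i, hi, ha, hb⟩ :=
    exists_mem_mem_of_surjOn_of_card_lt_card_add_card hsurj_start hsurj_end (by simpa using h)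
  rw [mem_neighborFinset] at ha hb
  obtain ⟨c, q, hperm, hca⟩ := exists_support_perm_and_adj_of_crossing p (mem_range.1 hi) ha hb
  have hq : q.IsPath := q.isPath_def.2 (hperm.nodup_iff.2 hp.1.support_nodup)
  exact ⟨c, q, hp.of_length_eq hq (by simpa using hperm.length_eq), hca⟩

end IsLongestPath

/-! ### Ore's theorem -/

variable [Fintype V] [DecidableRel G.Adj]

theorem exists_adj_adj_of_card_le_degree_add_degree {u v : V} (huv : ¬G.Adj u v)
    (h : Fintype.card V ≤ G.degree u + G.degree v) : ∃ w, G.Adj u w ∧ G.Adj v w := by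
  classical
  have hu : G.neighborFinset u ⊆ univ.erase u := fun w hw ↦ by
    simpa using (show G.Adj u w by simpa using hw).ne'
  have hv : G.neighborFinset v ⊆ univ.erase u := fun w hw ↦ by
    have hvw : G.Adj v w := by simpa using hw
    simpa using fun hwu : w = u ↦ huv (hwu ▸ hvw.symm)
  have hpos : 0 < Fintype.card V := Fintype.card_pos_iff.2 ⟨u⟩
  obtain ⟨w, hw⟩ := inter_nonempty_of_card_lt_card_add_card hu hv (by
    simp only [mem_univ, card_erase_of_mem, card_univ, card_neighborFinset_eq_degree]
    lia)
  exact ⟨w, by simpa using hw⟩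

theorem exists_isHamiltonian_adj_of_ore [Nontrivial V] [DecidableEq V]
    (hG : ∀ ⦃u v⦄, u ≠ v → ¬G.Adj u v → Fintype.card V ≤ G.degree u + G.degree v) :
    ∃ (a b : V) (p : G.Walk a b), p.IsHamiltonian ∧ G.Adj b a := by
  have hG' : ∀ ⦃u v⦄, u ≠ v → ¬G.Adj u v → ∃ w, G.Adj u w ∧ G.Adj v w := fun u v hne huv ↦
    exists_adj_adj_of_card_le_degree_add_degree huv (hG hne huv)
  obtain ⟨a, b, p, hp⟩ := exists_isLongestPath G
  have hab : a ≠ b := by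
    rintro rfl
    obtain ⟨v, hv⟩ := exists_ne a
    obtain ⟨w, haw⟩ : ∃ w, G.Adj a w := by
      by_cases hav : G.Adj a v
      · exact ⟨v, hav⟩
      · exact (hG' hv.symm hav).imp fun _ ↦ And.left
    have hnil : p = .nil := by simpa using hp.1
    exact haw.ne' (by simpa [hnil] using hp.mem_support_of_adj_start haw)
  obtain ⟨c, q, hq, hca⟩ : ∃ (c : V) (q : G.Walk a c), IsLongestPath q ∧ G.Adj c a := by
    by_cases hba : G.Adj b a
    · exact ⟨b, p, hp, hba⟩
    · exact hp.exists_isLongestPath_adj <|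
        hp.1.length_lt.trans_le (hG hab fun h ↦ hba h.symm)
  refine ⟨a, c, q, hq.1.isHamiltonian_of_mem fun w ↦ ?_, hca⟩
  by_contra hw
  have haw : ¬G.Adj a w := fun h ↦ hw (hq.mem_support_of_adj_start h)
  obtain ⟨x, hax, hwx⟩ := hG' (by rintro rfl; exact hw q.start_mem_support) haw
  exact hw (hq.mem_support_of_adj hca (hq.mem_support_of_adj_start hax) hwx.symm)

theorem exists_isPath_length_eq_of_ore
    (hG : ∀ ⦃u v⦄, u ≠ v → ¬G.Adj u v → Fintype.card V ≤ G.degree u + G.degree v)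
    {A B : Finset V} (hAB : Fintype.card V < #A + #B) {k : ℕ} (hk : k < Fintype.card V) :
    ∃ x ∈ A, ∃ y ∈ B, ∃ q : G.Walk x y, q.IsPath ∧ q.length = k := by
  classical
  rcases subsingleton_or_nontrivial V with hV | hV
  · obtain rfl : k = 0 := by have := Fintype.card_le_one_iff_subsingleton.2 hV; lia
    obtain ⟨x, hx⟩ :=
      inter_nonempty_of_card_lt_card_add_card (subset_univ A) (subset_univ B) (by simpa using hAB)
    rw [mem_inter] at hx
    exact ⟨x, hx.1, x, hx.2, .nil, .nil, rfl⟩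
  · obtain ⟨a, b, p, hp, hba⟩ := exists_isHamiltonian_adj_of_ore hG
    exact exists_isPath_length_eq_of_isHamiltonian_of_adj hp hba hAB hk

/-! ### Edge pancyclicity -/

theorem degree_le_card_subtype_notMem_add_card_erase [DecidableEq V] (s : Finset V) (v : V) :
    G.degree v ≤ #((G.neighborFinset v).subtype (· ∈ (s : Set V)ᶜ)) + #(s.erase v) := by
  have hsub : G.neighborFinset v ⊆ {w ∈ G.neighborFinset v | w ∈ (s : Set V)ᶜ} ∪ s.erase v :=
    fun w hw ↦ by
      have hvw : G.Adj v w := by simpa using hw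
      by_cases hws : w ∈ s <;> simp [hws, hvw, hvw.ne']
  rw [card_subtype]
  exact (card_le_card hsub).trans (card_union_le _ _)

theorem degree_le_degree_induce_compl_add_card [DecidableEq V] {s : Finset V}
    (v : ((s : Set V)ᶜ : Set V)) :
    G.degree v ≤ (G.induce (s : Set V)ᶜ).degree v + #s := by
  have hN : (G.induce (s : Set V)ᶜ).neighborFinset v
      = (G.neighborFinset (v : V)).subtype (· ∈ (s : Set V)ᶜ) := by
    ext; simp
  rw [← card_neighborFinset_eq_degree (G.induce _), hN]
  simpa [show (v : V) ∉ s from v.2] using degree_le_card_subtype_notMem_add_card_erase s (v : V)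

theorem exists_isPath_avoiding_of_ore [DecidableEq V] {s : Finset V}
    (hG : ∀ ⦃u v⦄, u ≠ v → ¬G.Adj u v → Fintype.card V + #s ≤ G.degree u + G.degree v)
    (hab : Fintype.card V + #(s.erase a) + #(s.erase b) < G.degree a + G.degree b + #s)
    {k : ℕ} (hk : k + #s < Fintype.card V) :
    ∃ (x y : V) (q : G.Walk x y), G.Adj a x ∧ G.Adj b y ∧ q.IsPath ∧ q.length = k ∧
      ∀ v ∈ s, v ∉ q.support := by
  have hcard : Fintype.card ((s : Set V)ᶜ : Set V) = Fintype.card V - #s := by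
    rw [Fintype.card_compl_set]
    simp
  have hore : ∀ ⦃u v : ((s : Set V)ᶜ : Set V)⦄, u ≠ v → ¬(G.induce (s : Set V)ᶜ).Adj u v →
      Fintype.card ((s : Set V)ᶜ : Set V) ≤
        (G.induce (s : Set V)ᶜ).degree u + (G.induce (s : Set V)ᶜ).degree v := fun u v hne huv ↦ by
    have := hG (Subtype.coe_injective.ne hne) huv
    have := degree_le_degree_induce_compl_add_card (G := G) u
    have := degree_le_degree_induce_compl_add_card (G := G) v
    lia
  have ha := degree_le_card_subtype_notMem_add_card_erase (G := G) s a
  have hb := degree_le_card_subtype_notMem_add_card_erase (G := G) s b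
  obtain ⟨x, hx, y, hy, q, hq, hqk⟩ := exists_isPath_length_eq_of_ore hore
    (A := (G.neighborFinset a).subtype (· ∈ (s : Set V)ᶜ))
    (B := (G.neighborFinset b).subtype (· ∈ (s : Set V)ᶜ)) (k := k) (by lia) (by lia)
  refine ⟨_, _, q.map (Embedding.induce (G := G) _).toHom, by simpa using hx, by simpa using hy,
    hq.map (Embedding.induce (G := G) _).injective, (q.length_map _).trans hqk, fun v hv hvq ↦ ?_⟩
  rw [Walk.support_map, List.mem_map] at hvq
  obtain ⟨w, -, rfl⟩ := hvq
  exact w.2 hv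

end

theorem edge_pancyclic_of_minDegree_general {V : Type*} [Fintype V] (G : SimpleGraph V)
    [DecidableRel G.Adj]
    (hG : ∀ ⦃u v⦄, u ≠ v → ¬G.Adj u v → Fintype.card V + 2 ≤ G.degree u + G.degree v)
    {α β : V} (hαβ : G.Adj α β) (hdeg : Fintype.card V < G.degree α + G.degree β)
    {ℓ : ℕ} (hℓ : 3 ≤ ℓ) (hℓN : ℓ ≤ Fintype.card V) :
    ∃ (v : V) (w : G.Walk v v), w.IsCycle ∧ w.length = ℓ ∧ s(α, β) ∈ w.edges := by
  classical
  have hcard : ({α, β} : Finset V).card = 2 := Finset.card_pair hαβ.ne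
  have herase : ∀ v ∈ ({α, β} : Finset V), (({α, β} : Finset V).erase v).card = 1 := fun v hv ↦ by
    rw [Finset.card_erase_of_mem hv, hcard]
  obtain ⟨x, y, q, hαx, hβy, hq, hlen, havoid⟩ :=
    exists_isPath_avoiding_of_ore (s := {α, β}) (a := α) (b := β) (k := ℓ - 3)
      (by rwa [hcard]) (by rw [herase α (by simp), herase β (by simp)]; lia) (by lia)
  obtain ⟨w, hw, hwlen, hwe⟩ :=
    exists_isCycle_of_isPath hq (havoid α (by simp)) (havoid β (by simp)) hαx hβy hαβ
  exact ⟨β, w, hw, by lia, hwe⟩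

/-- Let `Γ` be a graph of order `N ≥ 3`. If the minimum degree of `Γ` satisfies
`δ(Γ) ≥ (N + 2) / 2`, then `Γ` is edge pancyclic: every edge lies on a cycle of each
length `ℓ` with `3 ≤ ℓ ≤ N`. -/
theorem edge_pancyclic_of_minDegree {V : Type*} [Fintype V] (G : SimpleGraph V)
    [DecidableRel G.Adj] (hN : 3 ≤ Fintype.card V)
    (hδ : ((Fintype.card V : ℝ) + 2) / 2 ≤ (G.minDegree : ℝ)) :
    ∀ α β : V, G.Adj α β → ∀ ℓ : ℕ, 3 ≤ ℓ → ℓ ≤ Fintype.card V →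
      ∃ (v : V) (w : G.Walk v v), w.IsCycle ∧ w.length = ℓ ∧ s(α, β) ∈ w.edges := by
  intro α β hαβ ℓ hℓ hℓN
  have hdeg (u v : V) : Fintype.card V + 2 ≤ G.degree u + G.degree v := by
    have hδ' : Fintype.card V + 2 ≤ 2 * G.minDegree := by
      rify
      linarith
    have := G.minDegree_le_degree u
    have := G.minDegree_le_degree v
    lia
  exact edge_pancyclic_of_minDegree_general G (fun u v _ _ ↦ hdeg u v) hαβ
    (by have := hdeg α β; lia) hℓ hℓN
end

section
/- Let n ≥ 2, let α and β be permutations of {1,…,n} with Δ(α, β) ≥ 2, and let σ be a permutation of {1,…,n} that is a single cycle of length n. Then there exists i ∈ {0, 1, …, n−1} such that Δ(α, σ^i β) = 0, i.e., α(k) ≠ σ^i β(k) for all k ∈ {1,…,n}. -/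
/-- `σ` is a single cycle of length `n` on `Fin n`: the cyclic group generated by `σ`
acts transitively, i.e. every point is reachable from every point by iterating `σ`. -/
def IsSingleNCycle {n : ℕ} (σ : Equiv.Perm (Fin n)) : Prop :=
  ∀ x y : Fin n, ∃ k : ℕ, (σ ^ k) x = y

/-- `Delta σ₁ σ₂` is the number of points `i` with `σ₁ i = σ₂ i`
(the number of fixed points of `σ₁⁻¹ σ₂`). -/
def Delta {n : ℕ} (σ₁ σ₂ : Equiv.Perm (Fin n)) : ℕ :=
  (Finset.univ.filter fun i => σ₁ i = σ₂ i).card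

/-!
Since `σ` is an `n`-cycle, each `k` has exactly one exponent `e k < n` with
`α k = (σ ^ e k) (β k)`. Two agreements of `α` and `β` mean that `e` takes the value `0` twice,
so `e` is a non-injective map between sets of size `n` and misses some exponent `i`; this `i` works.
-/

open Equiv Finset

theorem IsSingleNCycle.isCycleOn_univ {n : ℕ} {σ : Perm (Fin n)} (hσ : IsSingleNCycle σ) :
    σ.IsCycleOn (univ : Finset (Fin n)) := by
  refine ⟨by simpa only [coe_univ] using Set.bijOn_univ.2 σ.bijective, fun x _ y _ ↦ ?_⟩
  obtain ⟨k, hk⟩ := hσ x y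
  exact ⟨k, by rwa [zpow_natCast]⟩

theorem delta_eq_zero_iff {n : ℕ} {α β : Perm (Fin n)} : Delta α β = 0 ↔ ∀ k, α k ≠ β k := by
  simp only [Delta, card_filter_eq_zero_iff, mem_univ, true_imp_iff, ne_eq]

section IsCycleOn

variable {X : Type*} {s : Finset X} {σ : Perm X}

theorem existsUnique_pow_apply_eq_of_isCycleOn (hσ : σ.IsCycleOn s) {x y : X} (hx : x ∈ s)
    (hy : y ∈ s) : ∃! i, i < #s ∧ (σ ^ i) x = y := by
  obtain ⟨i, hi, rfl⟩ := hσ.exists_pow_eq hx hy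
  refine ⟨i, ⟨hi, rfl⟩, fun j ⟨hj, hji⟩ ↦ ?_⟩
  exact ((hσ.pow_apply_eq_pow_apply hx).1 hji).eq_of_lt_of_lt hj hi

theorem exists_pow_delta_eq_zero_general [DecidableEq X] {ι : Type*} {t : Finset ι} {a b : ι → X}
    (hσ : σ.IsCycleOn s) (ha : Set.MapsTo a t s) (hb : Set.MapsTo b t s) (hts : #t ≤ #s)
    (hab : 2 ≤ #{k ∈ t | a k = b k}) : ∃ i < #s, ∀ k ∈ t, a k ≠ (σ ^ i) (b k) := by
  choose! e he e_unique using fun k (hk : k ∈ t) ↦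
    existsUnique_pow_apply_eq_of_isCycleOn hσ (hb hk) (ha hk)
  have maps_e : Set.MapsTo e t (range #s) := fun k hk ↦ mem_range.2 (he k hk).1
  have not_inj : ¬ Set.InjOn e t := by
    obtain ⟨k, hk, l, hl, hkl⟩ := one_lt_card.1 hab
    rw [mem_filter] at hk hl
    have e_eq_zero {m : ι} (hm : m ∈ t) (h : a m = b m) : e m = 0 :=
      (e_unique m hm 0 ⟨Nat.zero_lt_of_lt (he m hm).1, h.symm⟩).symm
    exact fun inj ↦ hkl (inj hk.1 hl.1 ((e_eq_zero hk.1 hk.2).trans (e_eq_zero hl.1 hl.2).symm))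
  have not_surj : ¬ Set.SurjOn e t (range #s) := fun surj ↦
    not_inj (injOn_of_surjOn_of_card_le e maps_e surj (by rwa [card_range]))
  obtain ⟨i, hi, i_notMem⟩ := Set.not_subset.1 not_surj
  have i_lt := mem_range.1 hi
  exact ⟨i, i_lt, fun k hk h ↦ i_notMem ⟨k, hk, (e_unique k hk i ⟨i_lt, h.symm⟩).symm⟩⟩

end IsCycleOn

/-- For `n ≥ 2`, permutations `α, β` with `Δ(α, β) ≥ 2` and a single `n`-cycle `σ`,
there is `i ∈ {0, …, n-1}` with `Δ(α, σ^i β) = 0`, i.e. `α k ≠ σ^i β k` for all `k`. -/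
theorem exists_pow_delta_eq_zero (n : ℕ) (hn : 2 ≤ n) (α β σ : Equiv.Perm (Fin n))
    (hΔ : 2 ≤ Delta α β) (hσ : IsSingleNCycle σ) :
    ∃ i < n, Delta α (σ ^ i * β) = 0 ∧ ∀ k, α k ≠ (σ ^ i * β) k := by
  obtain ⟨i, hi, hne⟩ := exists_pow_delta_eq_zero_general hσ.isCycleOn_univ
    (fun k _ ↦ mem_univ (α k)) (fun k _ ↦ mem_univ (β k)) le_rfl hΔ
  exact ⟨i, card_fin n ▸ hi, delta_eq_zero_iff.2 (hne · (mem_univ _)), (hne · (mem_univ _))⟩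
end
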